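/- For every inverse temperature β ∈ (0,∞), there exist constants c_β > 0 and C_β < ∞ (depending only on β) such that for every integer N ≥ 2, the variance of the height at the origin under the discrete Gaussian long-range chain with range exponent α = 3 satisfies c_β N/ln N ≤ Var_{N,β,3}[φ(0)] ≤ C_β N/ln N. -/

import Mathlib

noncomputable section

/-- Configurations of the long-range chain of length `N`: integer-valued height functions
on `ℤ` vanishing outside `{-N, …, N}`. -/
def ChainConfig (N : ℕ) : Type :=
  {φ : ℤ → ℤ // ∀ k : ℤ, (N : ℤ) < |k| → φ k = 0}

/-- Energy `β ∑_{i ≠ j} |φ(i) − φ(j)|^q / |i − j|^α` of a configuration of the long-range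
chain with potential exponent `q` and range exponent `α`. -/
def chainEnergy (β α q : ℝ) (φ : ℤ → ℤ) : ℝ :=
  β * ∑' p : ℤ × ℤ,
      if p.1 = p.2 then 0
      else |((φ p.1 - φ p.2 : ℤ) : ℝ)| ^ q / |((p.1 - p.2 : ℤ) : ℝ)| ^ α

/-- Boltzmann weight of a configuration. -/
def chainWeight (β α q : ℝ) (φ : ℤ → ℤ) : ℝ :=
  Real.exp (-chainEnergy β α q φ)

/-- Partition function of the long-range chain. -/
def chainZ (N : ℕ) (β α q : ℝ) : ℝ :=
  ∑' φ : ChainConfig N, chainWeight β α q φ.val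

/-- Mean of the height at the origin. -/
def chainMean (N : ℕ) (β α q : ℝ) : ℝ :=
  (∑' φ : ChainConfig N, ((φ.val 0 : ℤ) : ℝ) * chainWeight β α q φ.val) / chainZ N β α q

/-- Variance of the height at the origin under the long-range chain `μ_{N,β,α}`
(with potential exponent `q`; `q = 2` is the discrete Gaussian chain,
`q ∈ (0,2)` the `q`-SOS chain). -/
def chainVar (N : ℕ) (β α q : ℝ) : ℝ :=
  (∑' φ : ChainConfig N, ((φ.val 0 : ℤ) : ℝ) ^ 2 * chainWeight β α q φ.val) / chainZ N β α q
    - chainMean N β α q ^ 2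

end

noncomputable section
theorem dg_lower {Λ : Type*} [AddCommGroup Λ] (Q : Λ → ℝ) (F : Λ →+ ℝ) (M : ℕ) (a : ℕ → Λ)
    (B : ℕ → ℕ → ℝ) (C : ℝ) (hC : 0 < C)
    (hs : Summable fun x => Real.exp (-Q x)) (hs2 : Summable fun x => F x ^ 2 * Real.exp (-Q x))
    (hF : ∀ k < M, F (a k) = 1)
    (hB : ∀ k < M, ∀ l < M, ∀ x, Q (x - a k) + Q (x - a l) = Q x + Q (x - a k - a l) - 2 * B k l)
    (hV : ∑ k ∈ Finset.range M, ∑ l ∈ Finset.range M, (Real.exp (2 * B k l) - 1) ≤ C * M) :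
    M / C * ∑' x, Real.exp (-Q x) ≤ ∑' x, F x ^ 2 * Real.exp (-Q x) := by
  set w : Λ → ℝ := fun x => Real.exp (-Q x) with hw
  have wpos : ∀ x, 0 < w x := fun x => Real.exp_pos _
  set Z := ∑' x, w x with hZ
  have hZ0 : 0 ≤ Z := tsum_nonneg fun x => (wpos x).le
  have hs1 : Summable fun x => F x * w x := by
    refine Summable.of_norm_bounded (hs.add hs2) fun x => ?_
    rw [Real.norm_eq_abs, abs_mul, abs_of_pos (wpos x)]
    have : |F x| ≤ 1 + F x ^ 2 := by
      rw [← sq_abs]; nlinarith [sq_nonneg (|F x| - 1), abs_nonneg (F x)]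
    calc |F x| * w x ≤ (1 + F x ^ 2) * w x := by gcongr
      _ = _ := by simp only [hw]; ring
  have shift : ∀ b, HasSum (fun x => w (x - b)) Z := fun b =>
    ((Equiv.subRight b).hasSum_iff (f := w)).2 hs.hasSum
  have shiftF : ∀ b, HasSum (fun x => F x * w (x - b)) (∑' x, F x * w x + F b * Z) := by
    intro b
    have h := (hs1.hasSum).add (hs.hasSum.mul_left (F b))
    have := ((Equiv.subRight b).hasSum_iff (f := fun x => F x * w x + F b * w x)).2 h
    refine this.congr_fun ?_ |> fun h => h
    intro x
    simp [Equiv.subRight]; ring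
  set S : Λ → ℝ := fun x => ∑ k ∈ Finset.range M, (w (x - a k) / w x - 1) with hS
  have h1 : HasSum (fun x => F x * S x * w x) (M * Z) := by
    have : HasSum (fun x => ∑ k ∈ Finset.range M, (F x * w (x - a k) - F x * w x))
        (∑ k ∈ Finset.range M, ((∑' x, F x * w x + F (a k) * Z) - ∑' x, F x * w x)) :=
      hasSum_sum fun k _ => (shiftF (a k)).sub hs1.hasSum
    have e : (∑ k ∈ Finset.range M, ((∑' x, F x * w x + F (a k) * Z) - ∑' x, F x * w x)) = M * Z := by
      rw [Finset.sum_congr rfl (g := fun _ => Z)]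
      · simp
      · intro k hk; rw [hF k (Finset.mem_range.1 hk)]; ring
    rw [e] at this
    convert this using 2 with x
    rw [hS, Finset.mul_sum, Finset.sum_mul]
    refine Finset.sum_congr rfl fun k _ => ?_
    have := (wpos x).ne'
    field_simp
  have h2 : HasSum (fun x => S x ^ 2 * w x)
      ((∑ k ∈ Finset.range M, ∑ l ∈ Finset.range M, (Real.exp (2 * B k l) - 1)) * Z) := by
    have : HasSum (fun x => ∑ k ∈ Finset.range M, ∑ l ∈ Finset.range M,
        (Real.exp (2 * B k l) * w (x - (a k + a l)) - w (x - a k) - w (x - a l) + w x))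
        (∑ k ∈ Finset.range M, ∑ l ∈ Finset.range M, (Real.exp (2 * B k l) * Z - Z - Z + Z)) :=
      hasSum_sum fun k _ => hasSum_sum fun l _ =>
        ((((shift (a k + a l)).mul_left _).sub (shift (a k))).sub (shift (a l))).add hs.hasSum
    convert this using 2 with x
    · rw [hS, sq, Finset.sum_mul_sum, Finset.sum_mul]
      refine Finset.sum_congr rfl fun k hk => ?_
      rw [Finset.sum_mul]
      refine Finset.sum_congr rfl fun l hl => ?_
      have h := hB k (Finset.mem_range.1 hk) l (Finset.mem_range.1 hl) x
      have h' : w (x - a k) * w (x - a l) = Real.exp (2 * B k l) * w (x - (a k + a l)) * w x := by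
        simp only [hw]
        rw [← Real.exp_add, ← Real.exp_add, ← Real.exp_add, ← sub_sub]
        congr 1; linarith
      have := (wpos x).ne'
      field_simp
      linear_combination h'
    · rw [Finset.sum_mul]
      refine Finset.sum_congr rfl fun k hk => ?_
      rw [Finset.sum_mul]
      refine Finset.sum_congr rfl fun l hl => ?_
      ring
  set V := ∑ k ∈ Finset.range M, ∑ l ∈ Finset.range M, (Real.exp (2 * B k l) - 1) with hVd
  have h3 := ((hs2.hasSum).sub (h1.mul_left (2 / C))).add (h2.mul_left (1 / C ^ 2))
  have h4 : 0 ≤ (∑' x, F x ^ 2 * Real.exp (-Q x)) - 2 / C * (M * Z) + 1 / C ^ 2 * (V * Z) := by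
    refine h3.nonneg fun x => ?_
    have : F x ^ 2 * Real.exp (-Q x) - 2 / C * (F x * S x * w x) + 1 / C ^ 2 * (S x ^ 2 * w x)
      = (F x - S x / C) ^ 2 * w x := by
      simp only [hw]; field_simp; ring
    rw [this]
    exact mul_nonneg (sq_nonneg _) (wpos x).le
  have h5 : 1 / C ^ 2 * (V * Z) ≤ 1 / C ^ 2 * (C * M * Z) := by gcongr
  have h6 : 1 / C ^ 2 * (C * M * Z) = M / C * Z := by field_simp
  have h7 : 2 / C * (M * Z) = 2 * (M / C * Z) := by field_simp
  linarith
open ENNReal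
def fold2 {Λ : Type*} [AddCommGroup Λ] (f : Λ → ℝ≥0∞) (u : Λ) : ℝ≥0∞ := ∑' b, f (u - (b + b))

theorem fold2_per {Λ : Type*} [AddCommGroup Λ] (f : Λ → ℝ≥0∞) (u c : Λ) :
    fold2 f (u - (c + c)) = fold2 f u := by
  unfold fold2
  rw [← (Equiv.addRight c).tsum_eq (fun b => f (u - (b + b)))]
  refine tsum_congr fun b => ?_
  congr 1
  simp only [Equiv.coe_addRight]
  abel

theorem fold2_symm {Λ : Type*} [AddCommGroup Λ] (f g P : Λ → ℝ≥0∞)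
    (hP : ∀ u c, P (u - (c + c)) = P u) :
    ∑' u, f u * fold2 g u * P u = ∑' u, g u * fold2 f u * P u := by
  unfold fold2
  simp_rw [← ENNReal.tsum_mul_left, ← ENNReal.tsum_mul_right]
  rw [ENNReal.tsum_comm]
  rw [ENNReal.tsum_comm (f := fun u b => g u * f (u - (b + b)) * P u)]
  rw [← (Equiv.neg Λ).tsum_eq (fun b => ∑' u, g u * f (u - (b + b)) * P u)]
  refine tsum_congr fun b => ?_
  rw [← (Equiv.subRight (b + b)).tsum_eq (fun u => g u * f (u - (Equiv.neg Λ b + Equiv.neg Λ b)) * P u)]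
  refine tsum_congr fun u => ?_
  simp only [Equiv.subRight_apply, Equiv.neg_apply]
  rw [hP]
  have : u - (b + b) - (-b + -b) = u := by abel
  rw [this]; ring

theorem fold2_cs {Λ : Type*} [AddCommGroup Λ] (f g : Λ → ℝ≥0∞)
    (hf0 : ∀ u, f u ≠ 0) (hg0 : ∀ u, g u ≠ 0)
    (hf : ∀ u, fold2 f u ≠ ⊤) (hg : ∀ u, fold2 g u ≠ ⊤) (r : ℝ) (hr : 0 < r) :
    2 * ∑' u, f u * fold2 g u ≤ ENNReal.ofReal r * (∑' u, f u * fold2 f u)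
      + ENNReal.ofReal r⁻¹ * ∑' u, g u * fold2 g u := by
  have pos : ∀ f : Λ → ℝ≥0∞, (∀ u, f u ≠ 0) → ∀ u, fold2 f u ≠ 0 := by
    intro f hf u h
    unfold fold2 at h
    rw [ENNReal.tsum_eq_zero] at h
    exact hf _ (h 0)
  have key : ∑' u, g u * fold2 g u = ∑' u, f u * fold2 g u * (fold2 g u / fold2 f u) := by
    rw [fold2_symm f g (fun u => fold2 g u / fold2 f u)]
    · refine tsum_congr fun u => ?_
      rw [mul_assoc, ENNReal.mul_div_cancel (pos f hf0 u) (hf u)]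
    · intro u c; simp only [fold2_per]
  rw [key, ← ENNReal.tsum_mul_left, ← ENNReal.tsum_mul_left, ← ENNReal.tsum_mul_left, ← ENNReal.tsum_add]
  refine ENNReal.tsum_le_tsum fun u => ?_
  have h0 := pos f hf0 u
  generalize hx : fold2 f u = x at *
  have hxt : x ≠ ⊤ := hx ▸ hf u
  generalize hy : fold2 g u = y at *
  have hyt : y ≠ ⊤ := hy ▸ hg u
  have hxy : 2 * y ≤ ENNReal.ofReal r * x + ENNReal.ofReal r⁻¹ * (y * (y / x)) := by
    lift x to NNReal using hxt
    lift y to NNReal using hyt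
    have hx0 : 0 < (x : ℝ) := by
      have : x ≠ 0 := by simpa using h0
      positivity
    have e : ∀ z : NNReal, (z : ℝ≥0∞) = ENNReal.ofReal (z : ℝ) := fun z => by simp
    rw [e x, e y, ← ENNReal.ofReal_div_of_pos hx0, ← ENNReal.ofReal_mul (by positivity),
      ← ENNReal.ofReal_mul (by positivity), ← ENNReal.ofReal_mul (by positivity),
      ← ENNReal.ofReal_add (by positivity) (by positivity),
      show (2 : ℝ≥0∞) = ENNReal.ofReal 2 by simp, ← ENNReal.ofReal_mul (by positivity)]
    apply ENNReal.ofReal_le_ofReal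
    have : r * (x : ℝ) + r⁻¹ * (y * (y / x)) - 2 * y = (r * x - y) ^ 2 / (r * x) := by
      field_simp; ring
    have : 0 ≤ (r * x - y : ℝ) ^ 2 / (r * x) := by positivity
    linarith
  calc 2 * (f u * y) = f u * (2 * y) := by ring
    _ ≤ f u * (ENNReal.ofReal r * x + ENNReal.ofReal r⁻¹ * (y * (y / x))) := by gcongr
    _ = _ := by ring

theorem conv_eq {Λ : Type*} [AddCommGroup Λ] (Q : Λ → ℝ) (F : Λ →+ ℝ)
    (hQ : ∀ a b, Q (a + b) + Q (a - b) = 2 * Q a + 2 * Q b) (s t : ℝ) :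
    (∑' a, ENNReal.ofReal (Real.exp (-Q a + s * F a))) * (∑' a, ENNReal.ofReal (Real.exp (-Q a + t * F a)))
    = ∑' u, ENNReal.ofReal (Real.exp (-(Q u / 2) + (s + t) / 2 * F u)) *
       fold2 (fun u => ENNReal.ofReal (Real.exp (-(Q u / 2) + (s - t) / 2 * F u))) u := by
  unfold fold2
  simp_rw [← ENNReal.tsum_mul_left]
  rw [ENNReal.tsum_comm (f := fun u b => ENNReal.ofReal (Real.exp (-(Q u / 2) + (s + t) / 2 * F u)) *
    ENNReal.ofReal (Real.exp (-(Q (u - (b + b)) / 2) + (s - t) / 2 * F (u - (b + b)))))]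
  refine tsum_congr fun b => ?_
  rw [← ENNReal.tsum_mul_right, ← (Equiv.subRight b).tsum_eq]
  refine tsum_congr fun u => ?_
  rw [← ENNReal.ofReal_mul (Real.exp_pos _).le, ← ENNReal.ofReal_mul (Real.exp_pos _).le,
    ← Real.exp_add, ← Real.exp_add]
  congr 2
  have h := hQ (u - b) b
  rw [sub_add_cancel, sub_sub] at h
  simp only [Equiv.subRight_apply, map_sub, map_add]
  linarith

theorem dg_upper {Λ : Type*} [AddCommGroup Λ] (Q : Λ → ℝ) (F : Λ →+ ℝ)
    (hinj : Function.Injective fun b : Λ => b + b)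
    (hQ : ∀ a b, Q (a + b) + Q (a - b) = 2 * Q a + 2 * Q b)
    (G : ℝ) (hG : 0 < G) (hFQ : ∀ x, F x ^ 2 ≤ G * Q x)
    (hs : ∀ ε > 0, Summable fun x => Real.exp (-(ε * Q x))) :
    ∑' x, F x ^ 2 * Real.exp (-Q x) ≤ 2 * G * ∑' x, Real.exp (-Q x) := by
  have hbd : ∀ ε > 0, ∀ t x, -(ε * Q x) + t * F x ≤ t ^ 2 * G / (2 * ε) + -(ε / 2 * Q x) := by
    intro ε hε t x
    have h1 := hFQ x
    have h2 : ε * F x ^ 2 / G ≤ ε * Q x := by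
      rw [div_le_iff₀ hG]; nlinarith
    have h3 : t ^ 2 * G / (2 * ε) + ε * F x ^ 2 / G / 2 - t * F x
       = (t * G - ε * F x) ^ 2 / (2 * ε * G) := by field_simp; ring
    have h4 : 0 ≤ (t * G - ε * F x) ^ 2 / (2 * ε * G) := by positivity
    linarith
  have hst : ∀ ε > 0, ∀ t, Summable fun x => Real.exp (-(ε * Q x) + t * F x) := by
    intro ε hε t
    refine Summable.of_nonneg_of_le (fun _ => (Real.exp_pos _).le) (fun x => ?_)
      ((hs (ε / 2) (by positivity)).mul_left (Real.exp (t ^ 2 * G / (2 * ε))))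
    rw [← Real.exp_add]
    exact Real.exp_le_exp.2 (hbd ε hε t x)
  have hst1 : ∀ t, Summable fun x => Real.exp (-Q x + t * F x) := by
    intro t; simpa using hst 1 one_pos t
  have hst2 : ∀ t, Summable fun x => Real.exp (-(Q x / 2) + t * F x) := by
    intro t; simpa [div_eq_inv_mul] using hst (1/2) (by norm_num) t
  have hs1 : Summable fun x => Real.exp (-Q x) := by simpa using hs 1 one_pos
  have Q0 : Q 0 = 0 := by have := hQ 0 0; simp at this; linarith
  have Qneg : ∀ x, Q (-x) = Q x := by intro x; have := hQ 0 x; simp [Q0] at this; linarith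
  set Zt : ℝ → ℝ := fun t => ∑' x, Real.exp (-Q x + t * F x) with hZt
  have Zpos : ∀ t, 0 < Zt t := fun t =>
    (hst1 t).tsum_pos (fun _ => (Real.exp_pos _).le) 0 (Real.exp_pos _)
  have Zneg : ∀ t, Zt (-t) = Zt t := by
    intro t
    simp only [hZt]
    rw [← (Equiv.neg Λ).tsum_eq]
    refine tsum_congr fun x => ?_
    simp [Qneg]
  have hE : ∀ t, ∑' x, ENNReal.ofReal (Real.exp (-Q x + t * F x)) = ENNReal.ofReal (Zt t) := fun t =>
    (ENNReal.ofReal_tsum_of_nonneg (fun _ => (Real.exp_pos _).le) (hst1 t)).symm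
  have hfin : ∀ t u, fold2 (fun u => ENNReal.ofReal (Real.exp (-(Q u / 2) + t * F u))) u ≠ ⊤ := by
    intro t u
    refine ne_top_of_le_ne_top (b := ∑' u, ENNReal.ofReal (Real.exp (-(Q u / 2) + t * F u))) ?_ ?_
    · rw [← ENNReal.ofReal_tsum_of_nonneg (fun _ => (Real.exp_pos _).le) (hst2 t)]
      exact ENNReal.ofReal_ne_top
    · refine ENNReal.tsum_comp_le_tsum_of_injective (f := fun b => u - (b + b)) ?_ _
      intro b c h
      exact hinj (sub_right_injective h)
  have hcs : ∀ t, ∀ r > 0, 2 * (Zt t * Zt t) ≤ r * (Zt 0 * Zt 0) + r⁻¹ * (Zt (2 * t) * Zt 0) := by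
    intro t r hr
    have h := fold2_cs (fun u => ENNReal.ofReal (Real.exp (-(Q u / 2) + 0 * F u)))
      (fun u => ENNReal.ofReal (Real.exp (-(Q u / 2) + t * F u)))
      (fun u => by simp [Real.exp_pos]) (fun u => by simp [Real.exp_pos]) (hfin 0) (hfin t) r hr
    have e1 := conv_eq Q F hQ t (-t)
    have e2 := conv_eq Q F hQ 0 0
    have e3 := conv_eq Q F hQ (2 * t) 0
    rw [show (t + -t) / 2 = 0 by ring, show (t - -t) / 2 = t by ring] at e1
    rw [show ((0:ℝ) + 0) / 2 = 0 by ring, show ((0:ℝ) - 0) / 2 = 0 by ring] at e2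
    rw [show (2 * t + 0) / 2 = t by ring, show (2 * t - 0) / 2 = t by ring] at e3
    rw [← e1, ← e2, ← e3, hE, hE, hE, hE, Zneg] at h
    have z1 := (Zpos t).le
    have z2 := (Zpos 0).le
    have z3 := (Zpos (2 * t)).le
    rw [← ENNReal.ofReal_mul (by positivity), ← ENNReal.ofReal_mul (by positivity),
      ← ENNReal.ofReal_mul (by positivity), ← ENNReal.ofReal_mul (by positivity),
      ← ENNReal.ofReal_mul (by positivity),
      ← ENNReal.ofReal_add (by positivity) (by positivity),
      show (2 : ℝ≥0∞) = ENNReal.ofReal 2 by simp, ← ENNReal.ofReal_mul (by positivity)] at h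
    exact (ENNReal.ofReal_le_ofReal_iff (by positivity)).1 h
  set R : ℝ → ℝ := fun t => Zt t / Zt 0 with hR
  have Rpos : ∀ t, 0 < R t := fun t => div_pos (Zpos t) (Zpos 0)
  have hR4 : ∀ t, R t ^ 4 ≤ R (2 * t) := by
    intro t
    have h := hcs t (R t ^ 2) (by have := Rpos t; positivity)
    have z := Zpos 0
    have e1 : Zt t = R t * Zt 0 := by simp only [hR]; field_simp
    have e2 : Zt (2 * t) = R (2 * t) * Zt 0 := by simp only [hR]; field_simp
    rw [e1, e2] at h
    have rp := Rpos t
    have h' : 2 * R t ^ 2 ≤ R t ^ 2 + (R t ^ 2)⁻¹ * R (2 * t) := by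
      have : 0 < Zt 0 * Zt 0 := by positivity
      refine le_of_mul_le_mul_right ?_ this
      linarith
    have h'' : R t ^ 2 ≤ (R t ^ 2)⁻¹ * R (2 * t) := by linarith
    have := mul_le_mul_of_nonneg_left h'' (sq_nonneg (R t))
    rw [← mul_assoc, mul_inv_cancel₀ (by positivity), one_mul] at this
    calc R t ^ 4 = R t ^ 2 * R t ^ 2 := by ring
      _ ≤ _ := this
  have hRk : ∀ t (k : ℕ), R t ^ (4 ^ k) ≤ R (2 ^ k * t) := by
    intro t k
    induction k with
    | zero => simp
    | succ k ih =>
      calc R t ^ (4 ^ (k + 1)) = (R t ^ (4 ^ k)) ^ 4 := by rw [← pow_mul, pow_succ]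
        _ ≤ R (2 ^ k * t) ^ 4 := pow_le_pow_left₀ (pow_nonneg (Rpos t).le _) ih 4
        _ ≤ R (2 * (2 ^ k * t)) := hR4 _
        _ = _ := by congr 1; ring
  obtain ⟨D, hD⟩ : ∃ D : ℝ, ∀ t, R t ≤ D * Real.exp (t ^ 2 * G / 2) := by
    refine ⟨(∑' x, Real.exp (-(1 / 2 * Q x))) / Zt 0, fun t => ?_⟩
    have : Zt t ≤ (∑' x, Real.exp (-(1 / 2 * Q x))) * Real.exp (t ^ 2 * G / 2) := by
      rw [← tsum_mul_right]
      refine Summable.tsum_le_tsum (fun x => ?_) (hst1 t) ((hs (1/2) (by norm_num)).mul_right _)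
      rw [← Real.exp_add]
      have := hbd 1 one_pos t x
      simp only [one_mul, mul_one] at this
      exact Real.exp_le_exp.2 (by linarith)
    simp only [hR]
    rw [div_mul_eq_mul_div]
    exact div_le_div_of_nonneg_right this (Zpos 0).le
  have hRt : ∀ t, R t ≤ Real.exp (t ^ 2 * G / 2) := by
    intro t
    by_contra hlt
    push Not at hlt
    set q := R t / Real.exp (t ^ 2 * G / 2) with hq
    have hq1 : 1 < q := by rw [hq, one_lt_div (Real.exp_pos _)]; exact hlt
    obtain ⟨n, hn⟩ := pow_unbounded_of_one_lt D hq1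
    have h1 : q ^ n ≤ q ^ (4 ^ n) := pow_le_pow_right₀ hq1.le (Nat.lt_pow_self (by norm_num)).le
    have h2 : R t ^ (4 ^ n) ≤ D * Real.exp (t ^ 2 * G / 2) ^ (4 ^ n) := by
      refine (hRk t n).trans ((hD _).trans_eq ?_)
      rw [← Real.exp_nat_mul]
      congr 2
      push_cast
      rw [mul_pow, ← pow_mul, mul_comm n 2, pow_mul]; norm_num; ring
    have h3 : q ^ (4 ^ n) ≤ D := by
      rw [hq, div_pow, div_le_iff₀ (by positivity)]; exact h2
    linarith
  -- conclusion
  set t := Real.sqrt (2 / G) with ht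
  have ht2 : t ^ 2 = 2 / G := Real.sq_sqrt (by positivity)
  have hcosh : ∀ y : ℝ, y ^ 2 ≤ Real.exp y + Real.exp (-y) - 2 := by
    intro y
    have h1 : Real.exp y + Real.exp (-y) - 2 = 4 * Real.sinh (y / 2) ^ 2 := by
      rw [Real.sinh_eq]
      have e1 : Real.exp y = Real.exp (y / 2) ^ 2 := by rw [← Real.exp_nat_mul]; congr 1; push_cast; ring
      have e2 : Real.exp (-y) = Real.exp (-(y / 2)) ^ 2 := by
        rw [← Real.exp_nat_mul]; congr 1; push_cast; ring
      have e3 : Real.exp (y / 2) * Real.exp (-(y / 2)) = 1 := by rw [← Real.exp_add]; simp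
      rw [e1, e2]; linear_combination 2 * e3
    have h2 : (y / 2) ^ 2 ≤ Real.sinh (y / 2) ^ 2 := by
      rw [sq_le_sq]
      rcases le_total 0 (y / 2) with h | h
      · rw [abs_of_nonneg h, abs_of_nonneg (Real.sinh_nonneg_iff.2 h)]
        exact Real.self_le_sinh_iff.2 h
      · rw [abs_of_nonpos h, abs_of_nonpos (Real.sinh_nonpos_iff.2 h)]
        have := Real.sinh_le_self_iff.2 h
        linarith
    rw [h1]; linarith
  have hZ0 : Zt 0 = ∑' x, Real.exp (-Q x) := by simp [hZt]
  have hsum := (((hst1 t).add (hst1 (-t))).sub (hs1.mul_left 2)).mul_left (G / 2)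
  have hpt : ∀ x, F x ^ 2 * Real.exp (-Q x) ≤
     G / 2 * (Real.exp (-Q x + t * F x) + Real.exp (-Q x + -t * F x) - 2 * Real.exp (-Q x)) := by
    intro x
    have h := hcosh (t * F x)
    have : F x ^ 2 = G / 2 * (t * F x) ^ 2 := by rw [mul_pow, ht2]; field_simp
    rw [this, Real.exp_add, Real.exp_add, neg_mul]
    have e := Real.exp_pos (-Q x)
    calc _ ≤ G / 2 * (Real.exp (t * F x) + Real.exp (-(t * F x)) - 2) * Real.exp (-Q x) := by gcongr
      _ = _ := by ring
  have hsF : Summable fun x => F x ^ 2 * Real.exp (-Q x) :=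
    Summable.of_nonneg_of_le (fun x => by positivity) hpt hsum
  have h := Summable.tsum_le_tsum hpt hsF hsum
  rw [tsum_mul_left, Summable.tsum_sub ((hst1 t).add (hst1 (-t))) (hs1.mul_left 2),
    Summable.tsum_add (hst1 t) (hst1 (-t)), tsum_mul_left] at h
  refine h.trans ?_
  change G / 2 * (Zt t + Zt (-t) - 2 * _) ≤ _
  rw [Zneg, ← hZ0]
  have h1 := hRt t
  rw [ht2, show 2 / G * G / 2 = 1 by field_simp] at h1
  have h2 : Zt t ≤ Real.exp 1 * Zt 0 := by
    simp only [hR] at h1; rwa [div_le_iff₀ (Zpos 0)] at h1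
  have h3 := Real.exp_one_lt_d9
  have h4 : Zt t ≤ 3 * Zt 0 := h2.trans (by have := Zpos 0; gcongr; linarith)
  calc G / 2 * (Zt t + Zt t - 2 * Zt 0) ≤ G / 2 * (3 * Zt 0 + 3 * Zt 0 - 2 * Zt 0) := by gcongr
    _ = _ := by ring
end
noncomputable section

def kk (d : ℤ) : ℝ := (|(d : ℝ)| ^ 3)⁻¹

theorem kk_nonneg (d : ℤ) : 0 ≤ kk d := by unfold kk; positivity

theorem kk_summable : Summable kk := by
  have h := (Real.summable_abs_int_rpow (b := 3) (by norm_num))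
  refine h.congr fun d => ?_
  unfold kk
  rw [Real.rpow_neg (abs_nonneg _)]
  norm_cast

def ee (φ ψ : ℤ → ℤ) (p : ℤ × ℤ) : ℝ :=
  ((φ p.1 - φ (p.1 + p.2) : ℤ) : ℝ) * ((ψ p.1 - ψ (p.1 + p.2) : ℤ) : ℝ) * kk p.2

theorem ee_self_nonneg (φ : ℤ → ℤ) (p) : 0 ≤ ee φ φ p :=
  mul_nonneg (mul_self_nonneg _) (kk_nonneg _)

theorem ee_self_summable (N : ℕ) (φ : ℤ → ℤ) (hφ : ∀ k : ℤ, (N : ℤ) < |k| → φ k = 0) :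
    Summable (ee φ φ) := by
  have h0 : Summable fun i : ℤ => ((φ i : ℤ) : ℝ) ^ 2 := by
    refine summable_of_ne_finset_zero (s := Finset.Icc (-(N : ℤ)) N) fun i hi => ?_
    rw [hφ i]
    · simp
    · by_contra h
      push Not at h
      exact hi (Finset.mem_Icc.2 (abs_le.1 h))
  have h1 : Summable fun p : ℤ × ℤ => ((φ p.1 : ℤ) : ℝ) ^ 2 * kk p.2 :=
    h0.mul_of_nonneg kk_summable (fun _ => by positivity) kk_nonneg
  let e : ℤ × ℤ ≃ ℤ × ℤ :=
    { toFun := fun p => (p.1 + p.2, p.2), invFun := fun p => (p.1 - p.2, p.2)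
      left_inv := fun p => by simp, right_inv := fun p => by simp }
  have h2 : Summable fun p : ℤ × ℤ => ((φ (p.1 + p.2) : ℤ) : ℝ) ^ 2 * kk p.2 :=
    (e.summable_iff (f := fun p : ℤ × ℤ => ((φ p.1 : ℤ) : ℝ) ^ 2 * kk p.2)).2 h1
  refine Summable.of_nonneg_of_le (ee_self_nonneg φ) (fun p => ?_) ((h1.add h2).mul_left 2)
  unfold ee
  push_cast
  have := kk_nonneg p.2
  nlinarith [mul_nonneg (sq_nonneg ((φ p.1 : ℝ) + φ (p.1 + p.2))) this]

theorem ee_summable (N : ℕ) (φ ψ : ℤ → ℤ) (hφ : ∀ k : ℤ, (N : ℤ) < |k| → φ k = 0)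
    (hψ : ∀ k : ℤ, (N : ℤ) < |k| → ψ k = 0) : Summable (ee φ ψ) := by
  refine Summable.of_norm_bounded ((ee_self_summable N φ hφ).add (ee_self_summable N ψ hψ)) fun p => ?_
  unfold ee
  generalize ((φ p.1 - φ (p.1 + p.2) : ℤ) : ℝ) = x
  generalize ((ψ p.1 - ψ (p.1 + p.2) : ℤ) : ℝ) = y
  have hk := kk_nonneg p.2
  rw [norm_mul, Real.norm_of_nonneg hk, ← add_mul, Real.norm_eq_abs]
  refine mul_le_mul_of_nonneg_right ?_ hk
  rw [abs_le]; constructor <;> nlinarith [sq_nonneg (x + y), sq_nonneg (x - y)]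

theorem chainEnergy_eq (β : ℝ) (φ : ℤ → ℤ) : chainEnergy β 3 2 φ = β * ∑' p, ee φ φ p := by
  unfold chainEnergy
  congr 1
  let e : ℤ × ℤ ≃ ℤ × ℤ :=
    { toFun := fun p => (p.1, p.1 + p.2), invFun := fun p => (p.1, p.2 - p.1)
      left_inv := fun p => by simp, right_inv := fun p => by simp }
  rw [← e.tsum_eq]
  refine tsum_congr fun p => ?_
  simp only [e, Equiv.coe_fn_mk, ee, kk]
  have h2 : ∀ x : ℝ, |x| ^ (2 : ℝ) = x * x := by
    intro x; rw [show (2 : ℝ) = ((2 : ℕ) : ℝ) by norm_num, Real.rpow_natCast, sq_abs, sq]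
  have h3 : ∀ x : ℝ, |x| ^ (3 : ℝ) = |x| ^ 3 := by
    intro x; rw [show (3 : ℝ) = ((3 : ℕ) : ℝ) by norm_num, Real.rpow_natCast]
  rw [h2, h3]
  split_ifs with h
  · have : p.2 = 0 := by omega
    simp [this]
  · have : p.1 - (p.1 + p.2) = -p.2 := by ring
    rw [this, div_eq_mul_inv]
    push_cast
    rw [abs_neg]

def chainSub (N : ℕ) : AddSubgroup (ℤ → ℤ) where
  carrier := {φ | ∀ k : ℤ, (N : ℤ) < |k| → φ k = 0}
  zero_mem' := fun k _ => rfl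
  add_mem' := fun {a b} ha hb k hk => by simp [ha k hk, hb k hk]
  neg_mem' := fun {a} ha k hk => by simp [ha k hk]

instance chainGroup (N : ℕ) : AddCommGroup (ChainConfig N) :=
  inferInstanceAs (AddCommGroup (chainSub N))

theorem cc_add (N : ℕ) (a b : ChainConfig N) (k : ℤ) : (a + b).val k = a.val k + b.val k := rfl
theorem cc_neg (N : ℕ) (a : ChainConfig N) (k : ℤ) : (-a).val k = -a.val k := rfl
theorem cc_sub (N : ℕ) (a b : ChainConfig N) (k : ℤ) : (a - b).val k = a.val k - b.val k := rfl

def ccF (N : ℕ) : ChainConfig N →+ ℝ where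
  toFun := fun φ => ((φ.val 0 : ℤ) : ℝ)
  map_zero' := by
    have : (0 : ChainConfig N).val 0 = 0 := rfl
    rw [this]; simp
  map_add' := fun a b => by rw [cc_add]; push_cast; rfl

theorem ccF_apply (N : ℕ) (φ : ChainConfig N) : ccF N φ = ((φ.val 0 : ℤ) : ℝ) := rfl

theorem energy_para (β : ℝ) (N : ℕ) (a b : ChainConfig N) :
    chainEnergy β 3 2 (a + b).val + chainEnergy β 3 2 (a - b).val
     = 2 * chainEnergy β 3 2 a.val + 2 * chainEnergy β 3 2 b.val := by
  simp only [chainEnergy_eq]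
  have h := ((ee_self_summable N _ (a + b).2).hasSum.add (ee_self_summable N _ (a - b).2).hasSum)
  have h' := ((ee_self_summable N _ a.2).hasSum.mul_left 2).add
    ((ee_self_summable N _ b.2).hasSum.mul_left 2)
  have : ∀ p, ee (a + b).val (a + b).val p + ee (a - b).val (a - b).val p
      = 2 * ee a.val a.val p + 2 * ee b.val b.val p := by
    intro p; simp only [ee, cc_add, cc_sub]; push_cast; ring
  have := (h.congr_fun (fun p => (this p).symm)).unique h'
  linear_combination β * this

theorem energy_polar (β : ℝ) (N : ℕ) (x a b : ChainConfig N) :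
    chainEnergy β 3 2 (x - a).val + chainEnergy β 3 2 (x - b).val
     = chainEnergy β 3 2 x.val + chainEnergy β 3 2 (x - a - b).val
       - 2 * (β * ∑' p, ee a.val b.val p) := by
  simp only [chainEnergy_eq]
  have h := ((ee_self_summable N _ (x - a).2).hasSum.add (ee_self_summable N _ (x - b).2).hasSum)
  have h' := (((ee_self_summable N _ x.2).hasSum.add (ee_self_summable N _ (x - a - b).2).hasSum)).sub
    ((ee_summable N _ _ a.2 b.2).hasSum.mul_left 2)
  have : ∀ p, ee (x - a).val (x - a).val p + ee (x - b).val (x - b).val p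
      = ee x.val x.val p + ee (x - a - b).val (x - a - b).val p - 2 * ee a.val b.val p := by
    intro p; simp only [ee, cc_sub]; push_cast; ring
  have := (h.congr_fun (fun p => (this p).symm)).unique h'
  linear_combination β * this

theorem summable_pi_exp {ι : Type*} [Fintype ι] (c : ℝ) (hc : 0 < c) :
    Summable fun x : ι → ℤ => ∏ i, Real.exp (-(c * (x i : ℝ) ^ 2)) := by
  classical
  have h1 : Summable fun n : ℤ => Real.exp (-(c * (n : ℝ) ^ 2)) := by
    have hn : Summable fun n : ℕ => Real.exp (-(c * (n : ℝ) ^ 2)) := by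
      refine Summable.of_nonneg_of_le (fun _ => (Real.exp_pos _).le) (fun n => ?_)
        (Real.summable_exp_nat_mul_iff.2 (neg_lt_zero.2 hc))
      apply Real.exp_le_exp.2
      have : (n : ℝ) ≤ (n : ℝ) ^ 2 := by
        rcases Nat.eq_zero_or_pos n with h | h
        · simp [h]
        · have : (1 : ℝ) ≤ n := by exact_mod_cast h
          nlinarith
      nlinarith
    refine Summable.of_nat_of_neg ?_ ?_
    · simpa using hn
    · simpa using hn
  refine summable_of_sum_le (c := ∏ _i : ι, ∑' n : ℤ, Real.exp (-(c * (n : ℝ) ^ 2)))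
    (fun x => Finset.prod_nonneg fun _ _ => (Real.exp_pos _).le) fun s => ?_
  let t : ι → Finset ℤ := fun i => s.image fun x => x i
  have hst : s ⊆ Fintype.piFinset t := by
    intro x hx
    rw [Fintype.mem_piFinset]
    intro i
    exact Finset.mem_image_of_mem _ hx
  calc _ ≤ ∑ x ∈ Fintype.piFinset t, ∏ i, Real.exp (-(c * (x i : ℝ) ^ 2)) :=
        Finset.sum_le_sum_of_subset_of_nonneg hst
          fun _ _ _ => Finset.prod_nonneg fun _ _ => (Real.exp_pos _).le
    _ = ∏ i, ∑ n ∈ t i, Real.exp (-(c * (n : ℝ) ^ 2)) :=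
        (Finset.prod_univ_sum t (fun _ n => Real.exp (-(c * (n : ℝ) ^ 2)))).symm
    _ ≤ _ := Finset.prod_le_prod (fun _ _ => Finset.sum_nonneg fun _ _ => (Real.exp_pos _).le)
        fun i _ => h1.sum_le_tsum _ fun _ _ => (Real.exp_pos _).le

theorem coercive (N : ℕ) (φ : ChainConfig N) :
    ∑ i : Finset.Icc (-(N : ℤ)) N, (φ.val i : ℝ) ^ 2 * (((2 * N + 1 : ℕ) : ℝ) ^ 3)⁻¹
      ≤ ∑' p, ee φ.val φ.val p := by
  have h := (ee_self_summable N _ φ.2).comp_injective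
    (i := fun i : Finset.Icc (-(N : ℤ)) N => ((i : ℤ), (N : ℤ) + 1 - i)) (by
      intro a b hab
      simp only [Prod.mk.injEq] at hab
      exact Subtype.ext hab.1)
  have h2 := tsum_comp_le_tsum_of_inj (ee_self_summable N _ φ.2) (ee_self_nonneg φ.val)
    (i := fun i : Finset.Icc (-(N : ℤ)) N => ((i : ℤ), (N : ℤ) + 1 - i)) (by
      intro a b hab
      simp only [Prod.mk.injEq] at hab
      exact Subtype.ext hab.1)
  refine le_trans ?_ h2
  rw [tsum_fintype]
  refine Finset.sum_le_sum fun i _ => ?_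
  have hi := Finset.mem_Icc.1 i.2
  simp only [Function.comp, ee]
  have e : φ.val ((i : ℤ) + ((N : ℤ) + 1 - i)) = 0 := by
    apply φ.2
    rw [show (i : ℤ) + ((N : ℤ) + 1 - i) = N + 1 by ring, abs_of_nonneg (by positivity)]
    omega
  rw [e, sub_zero, ← sq]
  refine mul_le_mul_of_nonneg_left ?_ (sq_nonneg _)
  unfold kk
  have : (0 : ℤ) < (N : ℤ) + 1 - i := by omega
  have h0 : (0 : ℝ) < (((N : ℤ) + 1 - i : ℤ) : ℝ) := by exact_mod_cast this
  rw [abs_of_pos h0]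
  have h3 : (((N : ℤ) + 1 - i : ℤ) : ℝ) ≤ ((2 * N + 1 : ℕ) : ℝ) := by
    have : (N : ℤ) + 1 - i ≤ ((2 * N + 1 : ℕ) : ℤ) := by push_cast; omega
    exact_mod_cast this
  gcongr

theorem cc_summable (β : ℝ) (hβ : 0 < β) (N : ℕ) (ε : ℝ) (hε : 0 < ε) :
    Summable fun φ : ChainConfig N => Real.exp (-(ε * chainEnergy β 3 2 φ.val)) := by
  set c : ℝ := ε * β * (((2 * N + 1 : ℕ) : ℝ) ^ 3)⁻¹ with hc
  have hc0 : 0 < c := by positivity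
  have h := (summable_pi_exp (ι := Finset.Icc (-(N : ℤ)) N) c hc0).comp_injective
    (i := fun (φ : ChainConfig N) (i : Finset.Icc (-(N : ℤ)) N) => φ.val i) (by
      intro a b hab
      apply Subtype.ext
      funext k
      by_cases hk : k ∈ Finset.Icc (-(N : ℤ)) N
      · exact congrFun hab ⟨k, hk⟩
      · have : (N : ℤ) < |k| := by
          by_contra h
          push Not at h
          exact hk (Finset.mem_Icc.2 (abs_le.1 h))
        rw [a.2 k this, b.2 k this])
  refine Summable.of_nonneg_of_le (fun _ => (Real.exp_pos _).le) (fun φ => ?_) h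
  simp only [Function.comp]
  rw [← Real.exp_sum]
  apply Real.exp_le_exp.2
  have h1 := mul_le_mul_of_nonneg_left (coercive N φ) (mul_pos hε hβ).le
  rw [chainEnergy_eq, Finset.sum_neg_distrib, neg_le_neg_iff]
  rw [Finset.mul_sum] at h1
  calc _ = _ := Finset.sum_congr rfl fun i _ => ?_
    _ ≤ _ := h1
    _ = _ := by ring
  rw [hc]; ring

theorem chainVar_eq (N : ℕ) (β : ℝ) : chainVar N β 3 2 =
    (∑' φ : ChainConfig N, ccF N φ ^ 2 * Real.exp (-chainEnergy β 3 2 φ.val)) /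
      ∑' φ : ChainConfig N, Real.exp (-chainEnergy β 3 2 φ.val) := by
  have hm : (∑' φ : ChainConfig N, ((φ.val 0 : ℤ) : ℝ) * chainWeight β 3 2 φ.val) = 0 := by
    set T := (∑' φ : ChainConfig N, ((φ.val 0 : ℤ) : ℝ) * chainWeight β 3 2 φ.val) with hT
    have : T = -T := by
      conv_lhs => rw [hT, ← (Equiv.neg (ChainConfig N)).tsum_eq]
      rw [hT, ← tsum_neg]
      refine tsum_congr fun φ => ?_
      simp only [Equiv.neg_apply, cc_neg, chainWeight, chainEnergy_eq]
      have : ∀ p, ee (-φ).val (-φ).val p = ee φ.val φ.val p := by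
        intro p; simp only [ee, cc_neg]; push_cast; ring
      simp only [this]; push_cast; ring
    linarith
  unfold chainVar chainMean chainZ
  rw [hm]
  simp [chainWeight, ccF_apply]

end
noncomputable section

theorem tele_sq (f : ℕ → ℝ) (n : ℕ) :
    (f 0 - f n) ^ 2 ≤ n * ∑ l ∈ Finset.range n, (f l - f (l + 1)) ^ 2 := by
  rw [← Finset.sum_range_sub' f n]
  have := sq_sum_le_card_mul_sum_sq (s := Finset.range n) (f := fun l => f l - f (l + 1))
  simpa using this

theorem sum_blocks (g : ℕ → ℝ) (s n : ℕ) :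
    ∑ a ∈ Finset.range s, ∑ l ∈ Finset.range n, g (a + l * s) = ∑ i ∈ Finset.range (n * s), g i := by
  rw [Finset.sum_comm]
  induction n with
  | zero => simp
  | succ n ih =>
    rw [Finset.sum_range_succ, ih, Nat.succ_mul, Finset.sum_range_add]
    congr 1
    refine Finset.sum_congr rfl fun a _ => ?_
    rw [add_comm]

/-- sum of squared increments of step `s` over a window -/
def DD (N : ℕ) (φ : ℤ → ℤ) (s : ℕ) : ℝ :=
  ∑ i ∈ Finset.range (2 * N), ((φ (i : ℤ) : ℝ) - φ ((i : ℤ) + s)) ^ 2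

theorem DD_step (N : ℕ) (φ : ChainConfig N) (s : ℕ) (hs : 1 ≤ s) (hsN : s ≤ N) :
    (φ.val 0 : ℝ) ^ 2 / (2 * N * s) ≤ 2 * (DD N φ.val s * ((s : ℝ) ^ 3)⁻¹) + 2 * DD N φ.val 1 / N := by
  set n := N / s + 1 with hn
  have hns : N < n * s := by
    rw [hn]; have := Nat.lt_div_mul_add (a := N) (b := s) hs; linarith
  have hns2 : n * s ≤ 2 * N := by
    have := Nat.div_mul_le_self N s
    rw [hn, Nat.succ_mul]; omega
  have hD1 : 0 ≤ DD N φ.val 1 := Finset.sum_nonneg fun _ _ => sq_nonneg _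
  -- comparison of 0 and a
  have h1 : ∀ a < s, (φ.val 0 : ℝ) ^ 2 ≤ 2 * (φ.val (a : ℤ) : ℝ) ^ 2 + 2 * (s * DD N φ.val 1) := by
    intro a ha
    have h := tele_sq (fun i => (φ.val (i : ℤ) : ℝ)) a
    have h2 : ∑ l ∈ Finset.range a, ((φ.val (l : ℤ) : ℝ) - φ.val ((l + 1 : ℕ) : ℤ)) ^ 2 ≤ DD N φ.val 1 := by
      unfold DD
      push_cast
      exact Finset.sum_le_sum_of_subset_of_nonneg (Finset.range_subset_range.2 (by omega))
        fun _ _ _ => sq_nonneg _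
    have h3 : ((φ.val 0 : ℝ) - φ.val (a : ℤ)) ^ 2 ≤ s * DD N φ.val 1 := by
      refine le_trans (by simpa using h) ?_
      have : (a : ℝ) ≤ s := by exact_mod_cast ha.le
      push_cast at h2
      exact mul_le_mul this h2 (Finset.sum_nonneg fun _ _ => sq_nonneg _) (by positivity)
    nlinarith [sq_nonneg ((φ.val 0 : ℝ) - 2 * φ.val (a : ℤ))]
  have h2 : ∀ a < s, (φ.val (a : ℤ) : ℝ) ^ 2 ≤
      n * ∑ l ∈ Finset.range n, (fun i : ℕ => ((φ.val (i : ℤ) : ℝ) - φ.val ((i : ℤ) + s)) ^ 2) (a + l * s) := by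
    intro a ha
    have h := tele_sq (fun l => (φ.val ((a + l * s : ℕ) : ℤ) : ℝ)) n
    have e : φ.val ((a + n * s : ℕ) : ℤ) = 0 := by
      apply φ.2
      rw [abs_of_nonneg (by positivity)]
      exact_mod_cast (by omega : N < a + n * s)
    simp only [e, zero_mul, add_zero, Int.cast_zero, sub_zero] at h
    refine h.trans_eq ?_
    congr 1
    refine Finset.sum_congr rfl fun l _ => ?_
    congr 4
    push_cast; ring_nf
  have h3 : ∑ a ∈ Finset.range s, (φ.val (a : ℤ) : ℝ) ^ 2 ≤ n * DD N φ.val s := by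
    calc _ ≤ ∑ a ∈ Finset.range s, (n : ℝ) * ∑ l ∈ Finset.range n,
          (fun i : ℕ => ((φ.val (i : ℤ) : ℝ) - φ.val ((i : ℤ) + s)) ^ 2) (a + l * s) :=
          Finset.sum_le_sum fun a ha => h2 a (Finset.mem_range.1 ha)
      _ = n * ∑ i ∈ Finset.range (n * s), ((φ.val (i : ℤ) : ℝ) - φ.val ((i : ℤ) + s)) ^ 2 := by
          rw [← Finset.mul_sum]; exact congrArg _ (sum_blocks (fun i : ℕ => ((φ.val (i : ℤ) : ℝ) - φ.val ((i : ℤ) + s)) ^ 2) s n)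
      _ ≤ _ := by
          unfold DD
          gcongr
  have h4 : (s : ℝ) * (φ.val 0 : ℝ) ^ 2 ≤ 2 * (n * DD N φ.val s) + 2 * (s * (s * DD N φ.val 1)) := by
    have := Finset.sum_le_sum (s := Finset.range s) fun a ha => h1 a (Finset.mem_range.1 ha)
    rw [Finset.sum_add_distrib, ← Finset.mul_sum] at this
    simp only [Finset.sum_const, Finset.card_range, nsmul_eq_mul] at this
    linarith
  have hs0 : (0 : ℝ) < s := by exact_mod_cast hs
  have hn0 : (0 : ℝ) < n := by rw [hn]; positivity
  have hN0 : (0 : ℝ) < N := by exact_mod_cast (by omega : 0 < N)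
  have hr1 : (N : ℝ) ≤ n * s := by exact_mod_cast hns.le
  have hr2 : (n : ℝ) * s ≤ 2 * N := by exact_mod_cast hns2
  have h5 : (φ.val 0 : ℝ) ^ 2 / (n * s * s) ≤ 2 * (DD N φ.val s * ((s : ℝ) ^ 3)⁻¹) + 2 * DD N φ.val 1 / (n * s) := by
    have h6 := div_le_div_of_nonneg_right h4 (by positivity : (0 : ℝ) ≤ n * s ^ 3)
    calc _ = s * (φ.val 0 : ℝ) ^ 2 / (n * s ^ 3) := by field_simp
      _ ≤ _ := h6
      _ = _ := by field_simp
  calc _ ≤ (φ.val 0 : ℝ) ^ 2 / (n * s * s) := by gcongr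
    _ ≤ _ := h5
    _ ≤ _ := by gcongr

theorem DD_sum_le (N : ℕ) (φ : ChainConfig N) :
    ∑ s ∈ Finset.Icc 1 N, DD N φ.val s * ((s : ℝ) ^ 3)⁻¹ ≤ ∑' p, ee φ.val φ.val p := by
  classical
  let j : ℕ × ℕ → ℤ × ℤ := fun p => ((p.2 : ℤ), (p.1 : ℤ))
  have hj : Function.Injective j := by
    rintro ⟨a, b⟩ ⟨c, d⟩ h
    simp only [j, Prod.mk.injEq, Nat.cast_inj] at h
    ext <;> simp [h.1, h.2]
  have h := (ee_self_summable N _ φ.2).sum_le_tsum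
    (((Finset.Icc 1 N) ×ˢ (Finset.range (2 * N))).map ⟨j, hj⟩) (fun p _ => ee_self_nonneg φ.val p)
  rw [Finset.sum_map, Finset.sum_product] at h
  refine le_trans (Finset.sum_le_sum fun s _ => ?_) h
  unfold DD
  rw [Finset.sum_mul]
  refine Finset.sum_le_sum fun i _ => le_of_eq ?_
  simp only [Function.Embedding.coeFn_mk, j, ee, kk]
  push_cast
  rw [abs_of_nonneg (by positivity), sq]

theorem origin_le (N : ℕ) (hN : 2 ≤ N) (φ : ChainConfig N) :
    (φ.val 0 : ℝ) ^ 2 ≤ 8 * N / Real.log N * ∑' p, ee φ.val φ.val p := by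
  set E := ∑' p, ee φ.val φ.val p with hE
  have hN0 : (0 : ℝ) < N := by exact_mod_cast (by omega : 0 < N)
  have hD := DD_sum_le N φ
  have hD1 : DD N φ.val 1 ≤ E := by
    refine le_trans ?_ hD
    have := Finset.single_le_sum (f := fun s : ℕ => DD N φ.val s * ((s : ℝ) ^ 3)⁻¹) (s := Finset.Icc 1 N)
      (fun s _ => mul_nonneg (Finset.sum_nonneg fun _ _ => sq_nonneg _) (by positivity))
      (Finset.mem_Icc.2 ⟨le_refl 1, by omega⟩ : 1 ∈ Finset.Icc 1 N)
    simpa using this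
  have h := Finset.sum_le_sum (s := Finset.Icc 1 N) fun s hs =>
    DD_step N φ s (Finset.mem_Icc.1 hs).1 (Finset.mem_Icc.1 hs).2
  rw [Finset.sum_add_distrib, ← Finset.mul_sum] at h
  simp only [Finset.sum_const, Nat.card_Icc, nsmul_eq_mul, Nat.add_sub_cancel] at h
  have e1 : (N : ℝ) * (2 * DD N φ.val 1 / N) = 2 * DD N φ.val 1 := by field_simp
  rw [e1] at h
  have hlog : Real.log N ≤ ∑ s ∈ Finset.Icc 1 N, ((s : ℝ))⁻¹ := by
    have h1 := log_add_one_le_harmonic N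
    rw [harmonic_eq_sum_Icc] at h1
    push_cast at h1
    refine le_trans (Real.log_le_log hN0 (by linarith)) h1
  have e2 : ∑ s ∈ Finset.Icc 1 N, (φ.val 0 : ℝ) ^ 2 / (2 * N * s)
     = (φ.val 0 : ℝ) ^ 2 / (2 * N) * ∑ s ∈ Finset.Icc 1 N, ((s : ℝ))⁻¹ := by
    rw [Finset.mul_sum]
    refine Finset.sum_congr rfl fun s _ => ?_
    rw [← div_div, div_eq_mul_inv]
  rw [e2] at h
  have h3 : (φ.val 0 : ℝ) ^ 2 / (2 * N) * Real.log N ≤ 4 * E := by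
    have := mul_le_mul_of_nonneg_left hlog (by positivity : 0 ≤ (φ.val 0 : ℝ) ^ 2 / (2 * N))
    linarith
  have hl : 0 < Real.log N := Real.log_pos (by exact_mod_cast (by omega : 1 < N))
  rw [div_mul_eq_mul_div, div_le_iff₀ (by positivity)] at h3
  rw [div_mul_eq_mul_div, le_div_iff₀ hl]
  linarith

theorem inv_sq_sum (r : ℕ) (n : ℕ) :
    ∑ d ∈ Finset.Icc (-((r + n : ℕ) : ℤ)) ((r + n : ℕ) : ℤ), (if (r : ℤ) < |d| then ((d : ℝ) ^ 2)⁻¹ else 0)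
      ≤ 4 * (1 / (r + 1) - 1 / (r + n + 1)) := by
  induction n with
  | zero =>
    rw [Finset.sum_eq_zero]
    · simp
    · intro d hd
      have := abs_le.2 (Finset.mem_Icc.1 hd)
      rw [if_neg]; push Not; simpa using this
  | succ n ih =>
    have e : Finset.Icc (-((r + (n + 1) : ℕ) : ℤ)) ((r + (n + 1) : ℕ) : ℤ)
       = insert (-((r + (n + 1) : ℕ) : ℤ)) (insert ((r + (n + 1) : ℕ) : ℤ)
          (Finset.Icc (-((r + n : ℕ) : ℤ)) ((r + n : ℕ) : ℤ))) := by
      ext x; simp only [Finset.mem_insert, Finset.mem_Icc]; push_cast; omega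
    rw [e, Finset.sum_insert, Finset.sum_insert]
    · have hm : (0 : ℝ) < r + n + 1 := by positivity
      have e3 : (r : ℤ) < |((r + (n + 1) : ℕ) : ℤ)| := by
        rw [abs_of_nonneg (by positivity)]; push_cast; omega
      rw [abs_neg, if_pos e3, if_pos e3]
      push_cast
      have key : 2 * (((r : ℝ) + (n + 1)) ^ 2)⁻¹ ≤ 4 * (1 / ((r : ℝ) + n + 1) - 1 / ((r : ℝ) + (n + 1) + 1)) := by
        rw [show (r : ℝ) + (n + 1) = r + n + 1 by ring]
        have hm1 : (1 : ℝ) ≤ r + n + 1 := by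
          have : (0 : ℝ) ≤ r + n := by positivity
          linarith
        generalize (r : ℝ) + n + 1 = m at hm hm1
        have e : 4 * (1 / m - 1 / (m + 1)) = 4 / (m * (m + 1)) := by field_simp; ring
        rw [e, ← div_eq_mul_inv, div_le_div_iff₀ (by positivity) (by positivity)]
        nlinarith
      rw [neg_sq]
      push_cast at ih
      linarith
    · simp only [Finset.mem_Icc]; push_cast; omega
    · simp only [Finset.mem_insert, Finset.mem_Icc]; push_cast; omega

def box (N i : ℕ) (h : i ≤ N) : ChainConfig N :=
  ⟨fun x => if |x| ≤ (i : ℤ) then 1 else 0, fun k hk => if_neg (by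
    have : (i : ℤ) ≤ N := by exact_mod_cast h
    omega)⟩

theorem ee_box_le (N i j : ℕ) (hi : i ≤ N) (hj : j ≤ N) (hij : i ≤ j) :
    ∑' p, ee (box N i hi).val (box N j hj).val p ≤ 16 / (((j - i : ℕ) : ℝ) + 1) := by
  classical
  set r := j - i with hr
  have hpt : ∀ p : ℤ × ℤ, ee (box N i hi).val (box N j hj).val p ≤
      if (r : ℤ) < |p.2| ∧ p.1 ∈ Finset.Ioc ((i : ℤ) - |p.2|) (i + |p.2|) ∪ Finset.Ico (-(i : ℤ) - |p.2|) (-i + |p.2|)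
      then kk p.2 else 0 := by
    rintro ⟨x, d⟩
    have hk := kk_nonneg d
    simp only [ee, box]
    by_cases h1 : |x| ≤ (i : ℤ) <;> by_cases h2 : |x + d| ≤ (i : ℤ) <;>
    by_cases h3 : |x| ≤ (j : ℤ) <;> by_cases h4 : |x + d| ≤ (j : ℤ) <;>
    simp only [h1, h2, h3, h4, if_true, if_false] <;>
    first
    | (push_cast; ring_nf; split_ifs <;> simp [hk]; done)
    | (exfalso; omega)
    | (rw [if_pos]
       · norm_num
       · simp only [Finset.mem_union, Finset.mem_Ioc, Finset.mem_Ico]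
         rcases abs_cases x with ⟨e1, _⟩ | ⟨e1, _⟩ <;> rcases abs_cases d with ⟨e2, _⟩ | ⟨e2, _⟩ <;>
         rcases abs_cases (x + d) with ⟨e3, _⟩ | ⟨e3, _⟩ <;> omega)
  refine (ee_summable N _ _ (box N i hi).2 (box N j hj).2).tsum_le_of_sum_le fun s => ?_
  obtain ⟨R, hR⟩ : ∃ R : ℕ, ∀ p ∈ s, |p.2| ≤ (r + R : ℕ) := by
    refine ⟨∑ p ∈ s, p.2.natAbs, fun p hp => ?_⟩
    have := Finset.single_le_sum (f := fun p : ℤ × ℤ => p.2.natAbs) (fun _ _ => Nat.zero_le _) hp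
    have h2 := Int.natCast_natAbs p.2
    rw [← h2]; exact_mod_cast (by omega)
  have hsub : s ⊆ (s.image Prod.fst) ×ˢ (Finset.Icc (-((r + R : ℕ) : ℤ)) ((r + R : ℕ) : ℤ)) := by
    intro p hp
    rw [Finset.mem_product]
    exact ⟨Finset.mem_image_of_mem _ hp, Finset.mem_Icc.2 (abs_le.1 (hR p hp))⟩
  calc ∑ p ∈ s, ee (box N i hi).val (box N j hj).val p
    ≤ ∑ p ∈ s, (if (r : ℤ) < |p.2| ∧ p.1 ∈ Finset.Ioc ((i : ℤ) - |p.2|) (i + |p.2|) ∪ Finset.Ico (-(i : ℤ) - |p.2|) (-i + |p.2|)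
      then kk p.2 else 0) := Finset.sum_le_sum fun p _ => hpt p
    _ ≤ ∑ p ∈ (s.image Prod.fst) ×ˢ (Finset.Icc (-((r + R : ℕ) : ℤ)) ((r + R : ℕ) : ℤ)), (if (r : ℤ) < |p.2| ∧ p.1 ∈ Finset.Ioc ((i : ℤ) - |p.2|) (i + |p.2|) ∪ Finset.Ico (-(i : ℤ) - |p.2|) (-i + |p.2|)
      then kk p.2 else 0) := Finset.sum_le_sum_of_subset_of_nonneg hsub fun p _ _ => by
        split_ifs
        · exact kk_nonneg _
        · exact le_rfl
    _ ≤ ∑ d ∈ Finset.Icc (-((r + R : ℕ) : ℤ)) ((r + R : ℕ) : ℤ), 4 * (if (r : ℤ) < |d| then ((d : ℝ) ^ 2)⁻¹ else 0) := by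
        rw [Finset.sum_product_right]
        refine Finset.sum_le_sum fun d _ => ?_
        by_cases hd : (r : ℤ) < |d|
        · simp only [hd, true_and, if_true]
          rw [← Finset.sum_filter, Finset.sum_const, nsmul_eq_mul]
          have hc : ((Finset.image Prod.fst s).filter (fun x => x ∈ Finset.Ioc ((i : ℤ) - |d|) (i + |d|) ∪ Finset.Ico (-(i : ℤ) - |d|) (-i + |d|))).card ≤ 4 * d.natAbs := by
            refine le_trans (Finset.card_le_card (t := Finset.Ioc ((i : ℤ) - |d|) (i + |d|) ∪ Finset.Ico (-(i : ℤ) - |d|) (-i + |d|)) fun x hx => (Finset.mem_filter.1 hx).2) ?_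
            refine (Finset.card_union_le _ _).trans ?_
            rw [Int.card_Ioc, Int.card_Ico]
            have h2 := Int.natCast_natAbs d
            rw [← h2]
            omega
          have hc' : ((((Finset.image Prod.fst s).filter (fun x => x ∈ Finset.Ioc ((i : ℤ) - |d|) (i + |d|) ∪ Finset.Ico (-(i : ℤ) - |d|) (-i + |d|))).card : ℕ) : ℝ) ≤ 4 * |(d : ℝ)| := by
            refine le_trans (Nat.cast_le.2 hc) (le_of_eq ?_)
            push_cast
            rw [Nat.cast_natAbs]; push_cast; rfl
          refine (mul_le_mul_of_nonneg_right hc' (kk_nonneg d)).trans_eq ?_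
          have hd0 : |(d : ℝ)| ≠ 0 := by
            intro h0
            have : d = 0 := by simpa using h0
            rw [this] at hd; simp at hd; omega
          unfold kk
          rw [← sq_abs (d : ℝ)]
          field_simp
        · simp [hd]
    _ ≤ 4 * (4 * (1 / (r + 1) - 1 / (r + R + 1))) := by
        rw [← Finset.mul_sum]
        exact mul_le_mul_of_nonneg_left (inv_sq_sum r R) (by norm_num)
    _ ≤ _ := by
        have : (0 : ℝ) ≤ 1 / (r + R + 1) := by positivity
        have e : (16 : ℝ) / (r + 1) = 4 * (4 * (1 / (r + 1))) := by ring
        rw [e]; linarith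

theorem toeplitz_sum (K : ℝ) (hK : 0 ≤ K) (N L : ℕ) (hL : 1 + Real.log N ≤ L) (hN : 1 ≤ N)
    (g : ℕ → ℕ → ℝ)
    (hg1 : ∀ k l, k ≤ l → l < N / L + 1 → g k l ≤ K / (((l * L - k * L : ℕ) : ℝ) + 1))
    (hg2 : ∀ k l, g k l = g l k) :
    ∑ k ∈ Finset.range (N / L + 1), ∑ l ∈ Finset.range (N / L + 1), g k l
      ≤ 4 * K * ((N / L + 1 : ℕ) : ℝ) := by
  set M := N / L + 1 with hM
  have hlogN : 0 ≤ Real.log N := Real.log_natCast_nonneg N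
  have hL0 : (0 : ℝ) < L := by linarith
  let f : ℕ → ℝ := fun d => K / (((d * L : ℕ) : ℝ) + 1)
  have hf0 : ∀ d, 0 ≤ f d := fun d => by positivity
  have hf : ∑ d ∈ Finset.range M, f d ≤ 2 * K := by
    rw [hM, Finset.sum_range_succ']
    have h1 : ∀ d ∈ Finset.range (N / L), f (d + 1) ≤ K / L * ((d + 1 : ℕ) : ℝ)⁻¹ := by
      intro d _
      simp only [f]
      rw [← div_eq_mul_inv, div_div]
      push_cast
      apply div_le_div_of_nonneg_left hK (by positivity)
      nlinarith
    have h2 := Finset.sum_le_sum h1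
    rw [← Finset.mul_sum] at h2
    have h3 : ∑ d ∈ Finset.range (N / L), ((d + 1 : ℕ) : ℝ)⁻¹ ≤ L := by
      have h4 := harmonic_le_one_add_log (N / L)
      unfold harmonic at h4
      push_cast at h4
      push_cast
      have h5 : Real.log ((N / L : ℕ) : ℝ) ≤ Real.log N := by
        rcases Nat.eq_zero_or_pos (N / L) with h | h
        · rw [h]; simpa using hlogN
        · exact Real.log_le_log (by exact_mod_cast h) (by exact_mod_cast Nat.div_le_self N L)
      linarith
    have h6 : K / L * ∑ d ∈ Finset.range (N / L), ((d + 1 : ℕ) : ℝ)⁻¹ ≤ K / L * L := by gcongr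
    rw [div_mul_cancel₀ _ hL0.ne'] at h6
    have h7 : f 0 = K := by simp [f]
    linarith
  have hin : ∀ k, ∑ l ∈ Finset.range M, (if k ≤ l then f (l - k) else 0) ≤ 2 * K := by
    intro k
    rw [← Finset.sum_filter]
    have e : (Finset.range M).filter (fun l => k ≤ l) = Finset.Ico k M := by
      ext l; simp only [Finset.mem_filter, Finset.mem_range, Finset.mem_Ico]; omega
    rw [e, Finset.sum_Ico_eq_sum_range]
    simp only [Nat.add_sub_cancel_left]
    refine le_trans (Finset.sum_le_sum_of_subset_of_nonneg (Finset.range_subset_range.2 (Nat.sub_le M k))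
      fun d _ _ => hf0 d) hf
  have hgf : ∀ k ∈ Finset.range M, ∀ l ∈ Finset.range M, g k l ≤
      (if k ≤ l then f (l - k) else 0) + (if l ≤ k then f (k - l) else 0) := by
    intro k hk l hl
    have hk := Finset.mem_range.1 hk
    have hl := Finset.mem_range.1 hl
    have z1 : 0 ≤ (if k ≤ l then f (l - k) else 0) := by split_ifs; exacts [hf0 _, le_rfl]
    have z2 : 0 ≤ (if l ≤ k then f (k - l) else 0) := by split_ifs; exacts [hf0 _, le_rfl]
    rcases le_total k l with h | h
    · have := hg1 k l h hl
      rw [← Nat.sub_mul] at this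
      rw [if_pos h] at *
      simp only [f] at *
      linarith
    · have := hg1 l k h hk
      rw [← Nat.sub_mul, ← hg2] at this
      rw [if_pos h] at *
      simp only [f] at *
      linarith
  have h1 : ∑ k ∈ Finset.range M, ∑ l ∈ Finset.range M, (if k ≤ l then f (l - k) else 0) ≤ M * (2 * K) := by
    refine (Finset.sum_le_sum fun k _ => hin k).trans_eq ?_
    simp
  have h2 : ∑ k ∈ Finset.range M, ∑ l ∈ Finset.range M, (if l ≤ k then f (k - l) else 0) ≤ M * (2 * K) := by
    rw [Finset.sum_comm]; exact h1
  calc _ ≤ ∑ k ∈ Finset.range M, ∑ l ∈ Finset.range M,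
        ((if k ≤ l then f (l - k) else 0) + (if l ≤ k then f (k - l) else 0)) :=
        Finset.sum_le_sum fun k hk => Finset.sum_le_sum fun l hl => hgf k hk l hl
    _ ≤ M * (2 * K) + M * (2 * K) := by
        simp only [Finset.sum_add_distrib]; linarith
    _ = _ := by ring

theorem ee_comm (φ ψ : ℤ → ℤ) : ee φ ψ = ee ψ φ := by
  funext p; unfold ee; ring

theorem exp_sub_one_le (β r B : ℝ) (hβ : 0 < β) (hr : 0 ≤ r) (hB : B ≤ β * (16 / (r + 1))) :
    Real.exp (2 * B) - 1 ≤ 32 * β * Real.exp (32 * β) / (r + 1) := by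
  have h1 : β * (16 / (r + 1)) ≤ β * 16 := by
    gcongr
    exact div_le_self (by norm_num) (by linarith)
  set b := β * (16 / (r + 1)) with hb
  have hb0 : 0 ≤ b := by positivity
  have h2 : Real.exp (2 * B) ≤ Real.exp (2 * b) := Real.exp_le_exp.2 (by linarith)
  have h3 : Real.exp (2 * b) - 1 ≤ 2 * b * Real.exp (2 * b) := by
    have h4 := Real.add_one_le_exp (-(2 * b))
    have h5 : Real.exp (-(2 * b)) * Real.exp (2 * b) = 1 := by rw [← Real.exp_add]; simp
    have h6 := Real.exp_pos (2 * b)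
    nlinarith
  have h4 : Real.exp (2 * b) ≤ Real.exp (32 * β) := Real.exp_le_exp.2 (by linarith)
  have h5 : 2 * b * Real.exp (2 * b) ≤ 2 * b * Real.exp (32 * β) := by gcongr
  have h6 : 2 * b * Real.exp (32 * β) = 32 * β * Real.exp (32 * β) / (r + 1) := by
    rw [hb]; ring
  linarith

theorem lower_main (β : ℝ) (hβ : 0 < β) (N : ℕ) (hN : 2 ≤ N) :
    1 / (512 * β * Real.exp (32 * β)) * N / Real.log N ≤ chainVar N β 3 2 := by
  classical
  have hlog : 0 < Real.log N := Real.log_pos (by exact_mod_cast (by omega : 1 < N))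
  set L := ⌈1 + Real.log N⌉₊ with hLd
  have hL : 1 + Real.log N ≤ L := Nat.le_ceil _
  have hL2 : (L : ℝ) < 1 + Real.log N + 1 := Nat.ceil_lt_add_one (by linarith)
  have hL4 : (L : ℝ) ≤ 4 * Real.log N := by
    have h1 := Real.log_two_gt_d9
    have h2 : Real.log 2 ≤ Real.log N := Real.log_le_log (by norm_num) (by exact_mod_cast hN)
    linarith
  have hL0 : (0 : ℝ) < L := by linarith
  have hLn : 0 < L := by exact_mod_cast hL0
  let a : ℕ → ChainConfig N := fun k => if h : k * L ≤ N then box N (k * L) h else 0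
  have hkL : ∀ k < N / L + 1, k * L ≤ N := fun k hk =>
    (Nat.mul_le_mul_right L (Nat.lt_succ_iff.1 hk)).trans (Nat.div_mul_le_self N L)
  have ha : ∀ k (hk : k < N / L + 1), a k = box N (k * L) (hkL k hk) := fun k hk => dif_pos (hkL k hk)
  have hF : ∀ k < N / L + 1, ccF N (a k) = 1 := by
    intro k hk
    rw [ha k hk, ccF_apply]
    simp [box]
    positivity
  have hV : ∑ k ∈ Finset.range (N / L + 1), ∑ l ∈ Finset.range (N / L + 1),
      (Real.exp (2 * (β * ∑' p, ee (a k).val (a l).val p)) - 1)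
      ≤ 4 * (32 * β * Real.exp (32 * β)) * ((N / L + 1 : ℕ) : ℝ) := by
    refine toeplitz_sum _ (by positivity) N L hL (by omega)
      (fun k l => Real.exp (2 * (β * ∑' p, ee (a k).val (a l).val p)) - 1) ?_ ?_
    · intro k l hkl hl
      refine exp_sub_one_le β _ _ hβ (by positivity) ?_
      rw [ha k (by omega), ha l hl]
      exact mul_le_mul_of_nonneg_left (ee_box_le N _ _ _ _ (Nat.mul_le_mul_right L hkl)) hβ.le
    · intro k l
      simp only [ee_comm (a k).val (a l).val]
  have hs1 : Summable fun φ : ChainConfig N => Real.exp (-chainEnergy β 3 2 φ.val) := by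
    simpa using cc_summable β hβ N 1 one_pos
  have hs2 : Summable fun φ : ChainConfig N => ccF N φ ^ 2 * Real.exp (-chainEnergy β 3 2 φ.val) := by
    set G := 8 * N / Real.log N with hG
    have hG0 : 0 < G := by
      have : (0 : ℝ) < N := by exact_mod_cast (by omega : 0 < N)
      positivity
    refine Summable.of_nonneg_of_le (fun _ => by positivity) (fun φ => ?_)
      ((cc_summable β hβ N (1 / 2) (by norm_num)).mul_left (2 * G / β))
    have h1 := origin_le N hN φ
    rw [← hG] at h1
    have h2 : ccF N φ ^ 2 ≤ G / β * chainEnergy β 3 2 φ.val := by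
      rw [ccF_apply, chainEnergy_eq]
      refine h1.trans_eq ?_
      field_simp
    set E := chainEnergy β 3 2 φ.val
    have h3 := Real.add_one_le_exp (E / 2)
    have h4 : Real.exp (-E) * Real.exp (E / 2) = Real.exp (-(1 / 2 * E)) := by
      rw [← Real.exp_add]; congr 1; ring
    have h5 : ccF N φ ^ 2 ≤ 2 * G / β * Real.exp (E / 2) := by
      have : G / β * E = 2 * G / β * (E / 2) := by ring
      rw [this] at h2
      refine h2.trans ?_
      gcongr; linarith
    calc _ ≤ 2 * G / β * Real.exp (E / 2) * Real.exp (-E) := by gcongr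
      _ = _ := by rw [← h4]; ring
  have h := dg_lower (fun φ : ChainConfig N => chainEnergy β 3 2 φ.val) (ccF N) (N / L + 1) a
    (fun k l => β * ∑' p, ee (a k).val (a l).val p) (4 * (32 * β * Real.exp (32 * β))) (by positivity)
    hs1 hs2 hF (fun k _ l _ x => energy_polar β N x (a k) (a l)) hV
  have hZ : 0 < ∑' φ : ChainConfig N, Real.exp (-chainEnergy β 3 2 φ.val) :=
    hs1.tsum_pos (fun _ => (Real.exp_pos _).le) 0 (Real.exp_pos _)
  rw [chainVar_eq]
  refine le_trans ?_ ((le_div_iff₀ hZ).2 h)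
  have hM : (N : ℝ) / L ≤ ((N / L + 1 : ℕ) : ℝ) := by
    rw [div_le_iff₀ hL0]
    have := Nat.lt_div_mul_add (a := N) (b := L) hLn
    have : N ≤ (N / L + 1) * L := by rw [Nat.succ_mul]; omega
    exact_mod_cast this
  have hM2 : (N : ℝ) / (4 * Real.log N) ≤ ((N / L + 1 : ℕ) : ℝ) := le_trans (by gcongr) hM
  calc _ = (N : ℝ) / (4 * Real.log N) / (4 * (32 * β * Real.exp (32 * β))) := by field_simp; norm_num
    _ ≤ _ := by gcongr

theorem upper_main (β : ℝ) (hβ : 0 < β) (N : ℕ) (hN : 2 ≤ N) :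
    chainVar N β 3 2 ≤ 16 / β * N / Real.log N := by
  have hlog : 0 < Real.log N := Real.log_pos (by exact_mod_cast (by omega : 1 < N))
  have hN0 : (0 : ℝ) < N := by exact_mod_cast (by omega : 0 < N)
  have hs1 : Summable fun φ : ChainConfig N => Real.exp (-chainEnergy β 3 2 φ.val) := by
    simpa using cc_summable β hβ N 1 one_pos
  have hZ : 0 < ∑' φ : ChainConfig N, Real.exp (-chainEnergy β 3 2 φ.val) :=
    hs1.tsum_pos (fun _ => (Real.exp_pos _).le) 0 (Real.exp_pos _)
  have h := dg_upper (fun φ : ChainConfig N => chainEnergy β 3 2 φ.val) (ccF N)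
    (by
      intro a b hab
      apply Subtype.ext
      funext k
      have := congrArg (fun c : ChainConfig N => c.val k) hab
      simp only [cc_add] at this
      omega)
    (energy_para β N) (8 * N / Real.log N / β) (by positivity)
    (by
      intro φ
      rw [ccF_apply, chainEnergy_eq]
      refine (origin_le N hN φ).trans_eq ?_
      field_simp)
    (fun ε hε => cc_summable β hβ N ε hε)
  rw [chainVar_eq, div_le_iff₀ hZ]
  refine h.trans_eq ?_
  congr 1
  field_simp; norm_num

end

/-- **Delocalisation of the discrete Gaussian long-range chain at `α = 3`.**
For every `β ∈ (0,∞)` there exist constants `c_β > 0` and `C_β < ∞` such that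
for every `N ≥ 2`, `c_β N/ln N ≤ Var_{N,β,3}[φ(0)] ≤ C_β N/ln N`. -/
theorem gaussian_chain_deloc_alpha_eq_three
    (β : ℝ) (hβ : 0 < β) :
    ∃ c C : ℝ, 0 < c ∧
      ∀ N : ℕ, 2 ≤ N →
        c * (N : ℝ) / Real.log N ≤ chainVar N β 3 2 ∧
          chainVar N β 3 2 ≤ C * (N : ℝ) / Real.log N := by

  refine ⟨1 / (512 * β * Real.exp (32 * β)), 16 / β, by positivity, fun N hN => ⟨?_, ?_⟩⟩
  · exact lower_main β hβ N hN
  · exact upper_main β hβ N hN
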